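/- Let S = ⟨S, δ, L⟩ and S' = ⟨S', δ', L'⟩ be image-finite FLTSs and let x ∈ S, x' ∈ S'. Then there exists a crisp directed simulation Z between S and S' with Z(x,x') if and only if φ^S(x) ≤ φ^S'(x') for all formulas φ of fposΔK. -/

import Mathlib

open unitInterval

noncomputable section
attribute [local instance] Classical.propDecidable

instance : Fact ((0:ℝ) ≤ 1) := ⟨zero_le_one⟩

/-- A left-continuous t-norm on the unit interval `[0,1]`: a commutative, associative
binary operation with neutral element `1`, increasing in both arguments, that
distributes over suprema of nonempty sets (left-continuity). -/
structure Tnorm where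
  mul : I → I → I
  mul_comm : ∀ x y, mul x y = mul y x
  mul_assoc : ∀ x y z, mul (mul x y) z = mul x (mul y z)
  mul_one : ∀ x, mul x 1 = x
  mul_le_mul : ∀ {a b c d : I}, a ≤ b → c ≤ d → mul a c ≤ mul b d
  left_continuous : ∀ (x : I) (s : Set I), s.Nonempty → mul x (sSup s) = sSup (mul x '' s)

/-- The residuum of a t-norm: `(x ⇒ y) = sup {z | z ⊗ x ≤ y}`. -/
def Tnorm.res (T : Tnorm) (x y : I) : I := sSup {z : I | T.mul z x ≤ y}

/-- A fuzzy labeled transition system over actions `A`, propositions `P`, states `St`. -/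
structure FLTS (A P St : Type) where
  delta : St → A → St → I
  label : St → P → I

/-- A crisp directed simulation between two FLTSs. -/
def IsDirSimulation {A P S S' : Type} (M : FLTS A P S) (M' : FLTS A P S')
    (Z : S → S' → Prop) : Prop :=
  (∀ x x', Z x x' → ∀ p, M.label x p ≤ M'.label x' p) ∧
  (∀ x y x' (ρ : A), Z x x' → 0 < M.delta x ρ y →
    ∃ y', M.delta x ρ y ≤ M'.delta x' ρ y' ∧ Z y y') ∧
  (∀ x x' y' (ρ : A), Z x x' → 0 < M'.delta x' ρ y' →
    ∃ y, M'.delta x' ρ y' ≤ M.delta x ρ y ∧ Z y y')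

/-- Formulas of fposΔK. -/
inductive PKForm (A P : Type) : Type
  | const : I → PKForm A P
  | prop : P → PKForm A P
  | baaz : PKForm A P → PKForm A P
  | and : PKForm A P → PKForm A P → PKForm A P
  | or : PKForm A P → PKForm A P → PKForm A P
  | impl : I → PKForm A P → PKForm A P
  | box : A → PKForm A P → PKForm A P
  | dia : A → PKForm A P → PKForm A P

/-- Semantics of fposΔK formulas. -/
def pkSem (T : Tnorm) {A P St : Type} (M : FLTS A P St) : PKForm A P → St → I
  | .const a, _ => a
  | .prop p, x => M.label x p
  | .baaz φ, x => if pkSem T M φ x = 1 then 1 else 0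
  | .and φ ψ, x => min (pkSem T M φ x) (pkSem T M ψ x)
  | .or φ ψ, x => max (pkSem T M φ x) (pkSem T M ψ x)
  | .impl a φ, x => T.res a (pkSem T M φ x)
  | .box ρ φ, x => ⨅ y, T.res (M.delta x ρ y) (pkSem T M φ y)
  | .dia ρ φ, x => ⨆ y, T.mul (M.delta x ρ y) (pkSem T M φ y)

/-- An FLTS is image-finite if every state has finitely many positive successors
for each action. -/
def ImageFinite {A P St : Type} (M : FLTS A P St) : Prop :=
  ∀ (x : St) (ρ : A), {y : St | 0 < M.delta x ρ y}.Finite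

/-!
Every pair of states in a directed simulation is ordered by all formulas, by induction on the
formula. Conversely, the order given by all formulas is itself a directed simulation. The key is
that `Δ` and truth constants turn a failure `φ(y) > φ(y')` into the crisp separation given by
`Δ(φ(y) → φ)`, which is `1` at `y` and `0` at `y'`. If no successor `y'` of `x'` matched the
transition `δ(x, ρ, y) = d > 0`, a finite conjunction `ψ` would be `1` at `y` and `0` at all `y'`
with `δ'(x', ρ, y') ≥ d`. The remaining weights are, by finiteness, bounded by some `c < d`, so
`⟨ρ⟩ψ` would be at least `d` at `x` and at most `c` at `x'`. For transitions of the second system,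
a finite disjunction `ψ` and the formula `[ρ](ψ ∨ c)` play the same role.
-/

theorem exists_lt_forall_lt_imp_le {α β : Type*} [LinearOrder β] {f : α → β} {a d : β}
    (had : a < d) (hf : {y | a ≤ f y}.Finite) : ∃ c < d, ∀ y, f y < d → f y ≤ c := by
  obtain ⟨c, hc, hmax⟩ := Set.exists_max_image (insert a (f '' {y | a ≤ f y} ∩ Set.Iio d)) id
    (((hf.image f).inter_of_left _).insert a) (Set.insert_nonempty _ _)
  refine ⟨c, ?_, fun y hy => ?_⟩
  · rcases hc with rfl | ⟨-, hcd⟩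
    exacts [had, hcd]
  · rcases le_total a (f y) with hay | hya
    · exact hmax _ (.inr ⟨⟨y, hay, rfl⟩, hy⟩)
    · exact hya.trans (hmax a (.inl rfl))

namespace Tnorm

variable (T : Tnorm) {a b c d : I}

theorem one_mul (a : I) : T.mul 1 a = a := by
  rw [T.mul_comm, T.mul_one]

theorem mul_le_left (a b : I) : T.mul a b ≤ a :=
  calc
    T.mul a b ≤ T.mul a 1 := T.mul_le_mul le_rfl le_top
    _ = a := T.mul_one a

theorem zero_mul (a : I) : T.mul 0 a = 0 :=
  le_bot_iff.mp (T.mul_le_left 0 a)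

theorem mul_zero (a : I) : T.mul a 0 = 0 := by
  rw [T.mul_comm, T.zero_mul]

theorem res_mul_le (a b : I) : T.mul (T.res a b) a ≤ b := by
  have hne : {z | T.mul z a ≤ b}.Nonempty := ⟨0, (T.zero_mul a).trans_le bot_le⟩
  rw [T.mul_comm, res, T.left_continuous a _ hne]
  refine sSup_le ?_
  rintro _ ⟨z, hz, rfl⟩
  exact (T.mul_comm a z).trans_le hz

theorem le_res_iff : c ≤ T.res a b ↔ T.mul c a ≤ b :=
  ⟨fun h => (T.mul_le_mul h le_rfl).trans (T.res_mul_le a b), fun h => le_sSup h⟩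

theorem res_eq_one_iff : T.res a b = 1 ↔ a ≤ b := by
  rw [← T.one_mul a, ← T.le_res_iff, T.one_mul]
  exact top_le_iff.symm

theorem res_le_res (hab : b ≤ a) (hcd : c ≤ d) : T.res a c ≤ T.res b d :=
  T.le_res_iff.mpr <|
    calc
      T.mul (T.res a c) b ≤ T.mul (T.res a c) a := T.mul_le_mul le_rfl hab
      _ ≤ c := T.res_mul_le a c
      _ ≤ d := hcd

end Tnorm

/-- `ModalLE T M M' x x'` is the fuzzy modal preorder between states: every formula of fposΔK
holds at `x'` to at least the degree to which it holds at `x`. -/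
def ModalLE (T : Tnorm) {A P S S' : Type} (M : FLTS A P S) (M' : FLTS A P S') (x : S) (x' : S') :
    Prop :=
  ∀ φ : PKForm A P, pkSem T M φ x ≤ pkSem T M' φ x'

/-- A weakening of image-finiteness: from each state, each action has finitely many transitions of
weight at least `c`, for every `c > 0`. Equivalently, the weights tend to `0` along the cofinite
filter. -/
def ImageFiniteAbove {A P S : Type} (M : FLTS A P S) : Prop :=
  ∀ (x : S) (ρ : A) (c : I), 0 < c → {y | c ≤ M.delta x ρ y}.Finite

theorem ImageFinite.imageFiniteAbove {A P S : Type} {M : FLTS A P S} (hM : ImageFinite M) :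
    ImageFiniteAbove M :=
  fun x ρ _ hc => (hM x ρ).subset fun _ hy => hc.trans_le hy

theorem ImageFiniteAbove.exists_lt_forall_delta_le {A P S : Type} {M : FLTS A P S}
    (hM : ImageFiniteAbove M) (x : S) (ρ : A) {d : I} (hd : 0 < d) :
    ∃ c < d, ∀ y, M.delta x ρ y < d → M.delta x ρ y ≤ c := by
  obtain ⟨a, ha, had⟩ := exists_between hd
  exact exists_lt_forall_lt_imp_le had (hM x ρ a ha)

section Simulation

variable {A P S S' : Type} {T : Tnorm} {M : FLTS A P S} {M' : FLTS A P S'}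

namespace IsDirSimulation

variable {Z : S → S' → Prop} {φ : PKForm A P} {x : S} {x' : S'}

theorem pkSem_box_le (hZ : IsDirSimulation M M' Z)
    (hφ : ∀ y y', Z y y' → pkSem T M φ y ≤ pkSem T M' φ y') (ρ : A) (hx : Z x x') :
    pkSem T M (.box ρ φ) x ≤ pkSem T M' (.box ρ φ) x' := by
  refine le_iInf fun y' => ?_
  rcases eq_zero_or_pos (M'.delta x' ρ y') with hzero | hpos
  · have htop : T.res (M'.delta x' ρ y') (pkSem T M' φ y') = 1 :=
      T.res_eq_one_iff.mpr (hzero.trans_le bot_le)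
    exact htop.symm ▸ le_top
  · obtain ⟨y, hle, hy⟩ := hZ.2.2 x x' y' ρ hx hpos
    exact (iInf_le _ y).trans (T.res_le_res hle (hφ y y' hy))

theorem pkSem_dia_le (hZ : IsDirSimulation M M' Z)
    (hφ : ∀ y y', Z y y' → pkSem T M φ y ≤ pkSem T M' φ y') (ρ : A) (hx : Z x x') :
    pkSem T M (.dia ρ φ) x ≤ pkSem T M' (.dia ρ φ) x' := by
  refine iSup_le fun y => ?_
  rcases eq_zero_or_pos (M.delta x ρ y) with hzero | hpos
  · rw [hzero, T.zero_mul]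
    exact bot_le
  · obtain ⟨y', hle, hy⟩ := hZ.2.1 x y x' ρ hx hpos
    exact (T.mul_le_mul hle (hφ y y' hy)).trans
      (le_iSup (fun z' => T.mul (M'.delta x' ρ z') (pkSem T M' φ z')) y')

theorem modalLE (hZ : IsDirSimulation M M' Z) (hx : Z x x') : ModalLE T M M' x x' := by
  intro φ
  induction φ generalizing x x' with
  | const a => exact le_rfl
  | prop p => exact hZ.1 x x' hx p
  | baaz φ ih =>
    simp only [pkSem]
    split_ifs with h h'
    · exact le_rfl
    · exact absurd (le_antisymm le_top (h.symm.trans_le (ih hx))) h'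
    · exact bot_le
    · exact le_rfl
  | and φ ψ ihφ ihψ => exact min_le_min (ihφ hx) (ihψ hx)
  | or φ ψ ihφ ihψ => exact max_le_max (ihφ hx) (ihψ hx)
  | impl a φ ih => exact T.res_le_res le_rfl (ih hx)
  | box ρ φ ih => exact hZ.pkSem_box_le (fun _ _ => ih) ρ hx
  | dia ρ φ ih => exact hZ.pkSem_dia_le (fun _ _ => ih) ρ hx

end IsDirSimulation

theorem exists_pkSem_eq_one_and_eq_zero {y : S} {y' : S'} (h : ¬ ModalLE T M M' y y') :
    ∃ ψ : PKForm A P, pkSem T M ψ y = 1 ∧ pkSem T M' ψ y' = 0 := by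
  obtain ⟨φ, hφ⟩ := not_forall.mp h
  exact ⟨.baaz (.impl (pkSem T M φ y) φ), if_pos (T.res_eq_one_iff.mpr le_rfl),
    if_neg fun hone => hφ (T.res_eq_one_iff.mp hone)⟩

theorem exists_pkSem_eq_one_and_forall_eq_zero {y : S} {s : Set S'} (hs : s.Finite)
    (h : ∀ y' ∈ s, ¬ ModalLE T M M' y y') :
    ∃ ψ : PKForm A P, pkSem T M ψ y = 1 ∧ ∀ y' ∈ s, pkSem T M' ψ y' = 0 := by
  induction s, hs using Set.Finite.induction_on with
  | empty => exact ⟨.const 1, rfl, fun _ hy' => hy'.elim⟩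
  | @insert z' s _ _ ih =>
    rw [Set.forall_mem_insert] at h
    obtain ⟨χ, hχy, hχz⟩ := exists_pkSem_eq_one_and_eq_zero h.1
    obtain ⟨ψ, hψy, hψs⟩ := ih h.2
    refine ⟨.and χ ψ, ?_, Set.forall_mem_insert.mpr ⟨?_, fun y' hy' => ?_⟩⟩
    · simp only [pkSem, hχy, hψy, min_self]
    · exact (congrArg (min · _) hχz).trans (min_eq_left bot_le)
    · exact (congrArg (min _) (hψs y' hy')).trans (min_eq_right bot_le)

theorem exists_forall_pkSem_eq_one_and_eq_zero {s : Set S} {y' : S'} (hs : s.Finite)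
    (h : ∀ y ∈ s, ¬ ModalLE T M M' y y') :
    ∃ ψ : PKForm A P, (∀ y ∈ s, pkSem T M ψ y = 1) ∧ pkSem T M' ψ y' = 0 := by
  induction s, hs using Set.Finite.induction_on with
  | empty => exact ⟨.const 0, fun _ hy => hy.elim, rfl⟩
  | @insert z s _ _ ih =>
    rw [Set.forall_mem_insert] at h
    obtain ⟨χ, hχz, hχy⟩ := exists_pkSem_eq_one_and_eq_zero h.1
    obtain ⟨ψ, hψs, hψy⟩ := ih h.2
    refine ⟨.or χ ψ, Set.forall_mem_insert.mpr ⟨?_, fun y hy => ?_⟩, ?_⟩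
    · exact (congrArg (max · _) hχz).trans (max_eq_left le_top)
    · exact (congrArg (max _) (hψs y hy)).trans (max_eq_right le_top)
    · simp only [pkSem, hχy, hψy, max_self]

namespace ModalLE

variable {x : S} {x' : S'} {ρ : A}

theorem exists_delta_le_right (h : ModalLE T M M' x x') (hM' : ImageFiniteAbove M') {y : S}
    (hpos : 0 < M.delta x ρ y) :
    ∃ y', M.delta x ρ y ≤ M'.delta x' ρ y' ∧ ModalLE T M M' y y' := by
  by_contra! hno
  obtain ⟨c, hc, hgap⟩ := hM'.exists_lt_forall_delta_le x' ρ hpos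
  obtain ⟨ψ, hψy, hψ⟩ := exists_pkSem_eq_one_and_forall_eq_zero (hM' x' ρ _ hpos) hno
  have hupper : pkSem T M' (.dia ρ ψ) x' ≤ c := by
    refine iSup_le fun y' => ?_
    rcases le_or_gt (M.delta x ρ y) (M'.delta x' ρ y') with hle | hlt
    · rw [hψ y' hle, T.mul_zero]
      exact bot_le
    · exact (T.mul_le_left _ _).trans (hgap y' hlt)
  refine hc.not_ge ?_
  calc
    M.delta x ρ y = T.mul (M.delta x ρ y) (pkSem T M ψ y) := by rw [hψy, T.mul_one]
    _ ≤ pkSem T M (.dia ρ ψ) x := le_iSup (fun z => T.mul (M.delta x ρ z) (pkSem T M ψ z)) y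
    _ ≤ pkSem T M' (.dia ρ ψ) x' := h _
    _ ≤ c := hupper

theorem exists_delta_le_left (h : ModalLE T M M' x x') (hM : ImageFiniteAbove M) {y' : S'}
    (hpos : 0 < M'.delta x' ρ y') :
    ∃ y, M'.delta x' ρ y' ≤ M.delta x ρ y ∧ ModalLE T M M' y y' := by
  by_contra! hno
  obtain ⟨c, hc, hgap⟩ := hM.exists_lt_forall_delta_le x ρ hpos
  obtain ⟨ψ, hψ, hψy'⟩ := exists_forall_pkSem_eq_one_and_eq_zero (hM x ρ _ hpos) hno
  let φ : PKForm A P := .or ψ (.const c)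
  have hφ (y : S) : M.delta x ρ y ≤ pkSem T M φ y := by
    rcases le_or_gt (M'.delta x' ρ y') (M.delta x ρ y) with hle | hlt
    · exact le_max_of_le_left ((hψ y hle).symm ▸ le_top)
    · exact le_max_of_le_right (hgap y hlt)
  have hφy' : pkSem T M' φ y' = c := (congrArg (max · c) hψy').trans (max_eq_right bot_le)
  have hres : 1 ≤ T.res (M'.delta x' ρ y') (pkSem T M' φ y') :=
    calc
      1 ≤ pkSem T M (.box ρ φ) x := le_iInf fun y => (T.res_eq_one_iff.mpr (hφ y)).ge
      _ ≤ pkSem T M' (.box ρ φ) x' := h _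
      _ ≤ T.res (M'.delta x' ρ y') (pkSem T M' φ y') := iInf_le _ y'
  have hle : M'.delta x' ρ y' ≤ c := hφy' ▸ T.res_eq_one_iff.mp (le_antisymm le_top hres)
  exact hc.not_ge hle

theorem isDirSimulation (hM : ImageFiniteAbove M) (hM' : ImageFiniteAbove M') :
    IsDirSimulation M M' (ModalLE T M M') :=
  ⟨fun _ _ h p => h (.prop p), fun _ _ _ _ h hpos => h.exists_delta_le_right hM' hpos,
    fun _ _ _ _ h hpos => h.exists_delta_le_left hM hpos⟩

end ModalLE

end Simulation

theorem dirSimulation_iff_fposK_general {A P S S' : Type} (T : Tnorm) (M : FLTS A P S)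
    (M' : FLTS A P S') (hM : ImageFiniteAbove M) (hM' : ImageFiniteAbove M') (x : S) (x' : S') :
    (∃ Z : S → S' → Prop, IsDirSimulation M M' Z ∧ Z x x') ↔
      (∀ φ : PKForm A P, pkSem T M φ x ≤ pkSem T M' φ x') :=
  ⟨fun ⟨_, hZ, hx⟩ => hZ.modalLE hx,
    fun h => ⟨ModalLE T M M', ModalLE.isDirSimulation hM hM', h⟩⟩

/-- For image-finite FLTSs, a state `x'` directedly simulates `x` iff `x'` satisfies
all fposΔK formulas at least as much as `x` does. -/
theorem dirSimulation_iff_fposK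
    {A P S S' : Type} [Nonempty A] [Nonempty P] [Nonempty S] [Nonempty S']
    (T : Tnorm) (M : FLTS A P S) (M' : FLTS A P S')
    (hM : ImageFinite M) (hM' : ImageFinite M')
    (x : S) (x' : S') :
    (∃ Z : S → S' → Prop, IsDirSimulation M M' Z ∧ Z x x') ↔
      (∀ φ : PKForm A P, pkSem T M φ x ≤ pkSem T M' φ x') :=
  dirSimulation_iff_fposK_general T M M' hM.imageFiniteAbove hM'.imageFiniteAbove x x'
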